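/- arXiv:math/0411153 — 2 statements merged into one kernel-verified Lean document; each statement's English description precedes it below -/
import Mathlib

section
/- Fan's theorem: for Hermitian n×n matrices A and B, the eigenvalue sequence of A+B (in non-increasing order) is majorized by the entrywise sum of the eigenvalue sequences of A and B (each in non-increasing order). -/
def Majorizes {I K : Type*} [Fintype I] [Fintype K] (y : I → ℝ) (x : K → ℝ) : Prop :=
  (∀ A : Finset K, ∃ B : Finset I, B.card = A.card ∧ ∑ i ∈ A, x i ≤ ∑ i ∈ B, y i) ∧
  (∑ i, x i) = (∑ i, y i)

open scoped InnerProductSpace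

/-- A weighted sum of an antitone sequence, with weights in `[0, 1]` of total mass `k`, is at most
the sum of its first `k` terms. -/
theorem Antitone.sum_mul_le_sum_filter_lt {n : ℕ} {a w : Fin n → ℝ} (ha : Antitone a)
    (hw0 : ∀ i, 0 ≤ w i) (hw1 : ∀ i, w i ≤ 1) {k : ℕ} (hk : k ≤ n) (hw : ∑ i, w i = k) :
    ∑ i, a i * w i ≤ ∑ i : Fin n with i.val < k, a i := by
  obtain ⟨t, ht⟩ : ∃ t, ∀ i : Fin n, (i.val < k → t ≤ a i) ∧ (k ≤ i.val → a i ≤ t ∨ w i = 0) := by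
    rcases Nat.eq_zero_or_pos k with rfl | hpos
    · refine ⟨0, fun i => ⟨by simp, fun _ => .inr ?_⟩⟩
      have h0 : ∑ i, w i = 0 := by simpa using hw
      exact (Finset.sum_eq_zero_iff_of_nonneg fun i _ => hw0 i).1 h0 i (Finset.mem_univ i)
    · refine ⟨a ⟨k - 1, by omega⟩, fun i => ⟨fun h => ha ?_, fun h => .inl (ha ?_)⟩⟩ <;>
        rw [Fin.le_def] <;> dsimp only <;> omega
  have hcard : (Finset.univ.filter fun i : Fin n => i.val < k).card = k := by
    rw [Fin.card_filter_val_lt, min_eq_right hk]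
  have key : ∑ i, (a i - t) * w i ≤ ∑ i : Fin n with i.val < k, (a i - t) := by
    rw [Finset.sum_filter]
    refine Finset.sum_le_sum fun i _ => ?_
    split_ifs with h
    · exact mul_le_of_le_one_right (sub_nonneg.2 ((ht i).1 h)) (hw1 i)
    · rcases (ht i).2 (not_lt.1 h) with h' | h'
      · exact mul_nonpos_of_nonpos_of_nonneg (sub_nonpos.2 h') (hw0 i)
      · simp [h']
  simp only [sub_mul, Finset.sum_sub_distrib, ← Finset.mul_sum, hw, Finset.sum_const, hcard,
    nsmul_eq_mul] at key
  linarith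

section InnerProduct

variable {𝕜 E ι : Type*} [RCLike 𝕜] [NormedAddCommGroup E] [InnerProductSpace 𝕜 E]

theorem LinearMap.IsSymmetric.re_inner_eq_sum_mul_norm_inner_sq [Fintype ι] {T : E →ₗ[𝕜] E}
    (hT : T.IsSymmetric) (u : OrthonormalBasis ι 𝕜 E) {a : ι → ℝ}
    (hu : ∀ i, T (u i) = (a i : 𝕜) • u i) (x : E) :
    RCLike.re ⟪x, T x⟫_𝕜 = ∑ i, a i * ‖⟪u i, x⟫_𝕜‖ ^ 2 := by
  rw [← u.sum_inner_mul_inner, map_sum]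
  refine Finset.sum_congr rfl fun i _ => ?_
  rw [← hT, hu, inner_smul_left, RCLike.conj_ofReal, mul_left_comm, RCLike.re_ofReal_mul,
    inner_mul_symm_re_eq_norm, norm_mul, norm_inner_symm, sq]

/-- **Ky Fan's maximum principle**: the sum of the values of a quadratic form at `k` orthonormal
vectors is at most the sum of its `k` largest eigenvalues. -/
theorem LinearMap.IsSymmetric.sum_re_inner_le_sum_filter_lt {n : ℕ} {T : E →ₗ[𝕜] E}
    (hT : T.IsSymmetric) (u : OrthonormalBasis (Fin n) 𝕜 E) {a : Fin n → ℝ} (ha : Antitone a)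
    (hu : ∀ i, T (u i) = (a i : 𝕜) • u i) {v : ι → E} (hv : Orthonormal 𝕜 v) (S : Finset ι)
    (hS : S.card ≤ n) :
    ∑ j ∈ S, RCLike.re ⟪v j, T (v j)⟫_𝕜 ≤ ∑ i : Fin n with i.val < S.card, a i := by
  simp_rw [hT.re_inner_eq_sum_mul_norm_inner_sq u hu]
  rw [Finset.sum_comm]
  simp_rw [← Finset.mul_sum]
  refine ha.sum_mul_le_sum_filter_lt (fun i => by positivity) (fun i => ?_) hS ?_
  · simp_rw [norm_inner_symm (u i)]
    simpa using hv.sum_inner_products_le (u i) (s := S)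
  · rw [Finset.sum_comm]
    simp [u.sum_sq_norm_inner_right, hv.norm_eq_one]

end InnerProduct

theorem Matrix.IsHermitian.exists_orthonormalBasis_of_eq_eigenvalues_comp {ι : Type*} [Fintype ι]
    [DecidableEq ι] {A : Matrix ι ι ℂ} (hA : A.IsHermitian) {a : ι → ℝ}
    (hae : ∃ σ : Equiv.Perm ι, a = hA.eigenvalues ∘ σ) :
    ∃ u : OrthonormalBasis ι ℂ (EuclideanSpace ℂ ι),
      ∀ i, Matrix.toEuclideanLin A (u i) = (a i : ℂ) • u i := by
  obtain ⟨σ, rfl⟩ := hae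
  refine ⟨hA.eigenvectorBasis.reindex σ.symm, fun i => ?_⟩
  have h := hA.mulVec_eigenvectorBasis (σ i)
  ext j
  simpa using congrFun h j

theorem Matrix.IsHermitian.sum_eq_re_trace {ι : Type*} [Fintype ι] [DecidableEq ι]
    {A : Matrix ι ι ℂ} (hA : A.IsHermitian) {a : ι → ℝ}
    (hae : ∃ σ : Equiv.Perm ι, a = hA.eigenvalues ∘ σ) : ∑ i, a i = A.trace.re := by
  obtain ⟨σ, rfl⟩ := hae
  rw [hA.trace_eq_sum_eigenvalues]
  simpa using Equiv.sum_comp σ hA.eigenvalues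

theorem fan_theorem {n : ℕ} (A B : Matrix (Fin n) (Fin n) ℂ)
    (hA : A.IsHermitian) (hB : B.IsHermitian) (hAB : (A + B).IsHermitian)
    (a b c : Fin n → ℝ) (ha : Antitone a) (hb : Antitone b) (hc : Antitone c)
    (hae : ∃ σ : Equiv.Perm (Fin n), a = hA.eigenvalues ∘ σ)
    (hbe : ∃ σ : Equiv.Perm (Fin n), b = hB.eigenvalues ∘ σ)
    (hce : ∃ σ : Equiv.Perm (Fin n), c = hAB.eigenvalues ∘ σ) :
    Majorizes (a + b) c := by
  refine ⟨fun S => ⟨Finset.univ.filter fun i => i.val < S.card, ?_, ?_⟩, ?_⟩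
  · rw [Fin.card_filter_val_lt, min_eq_right (card_finset_fin_le S)]
  · obtain ⟨u, hu⟩ := hA.exists_orthonormalBasis_of_eq_eigenvalues_comp hae
    obtain ⟨v, hv⟩ := hB.exists_orthonormalBasis_of_eq_eigenvalues_comp hbe
    obtain ⟨w, hw⟩ := hAB.exists_orthonormalBasis_of_eq_eigenvalues_comp hce
    have hc_eq : ∀ j, c j = RCLike.re ⟪w j, Matrix.toEuclideanLin A (w j)⟫_ℂ +
        RCLike.re ⟪w j, Matrix.toEuclideanLin B (w j)⟫_ℂ := fun j => by
      rw [← map_add, ← inner_add_right, ← LinearMap.add_apply, ← map_add, hw, inner_smul_right]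
      simp
    simp_rw [hc_eq, Pi.add_apply, Finset.sum_add_distrib]
    exact add_le_add
      ((Matrix.isSymmetric_toEuclideanLin_iff.2 hA).sum_re_inner_le_sum_filter_lt u ha hu
        w.orthonormal S (card_finset_fin_le S))
      ((Matrix.isSymmetric_toEuclideanLin_iff.2 hB).sum_re_inner_le_sum_filter_lt v hb hv
        w.orthonormal S (card_finset_fin_le S))
  · simp [Finset.sum_add_distrib, hA.sum_eq_re_trace hae, hB.sum_eq_re_trace hbe,
      hAB.sum_eq_re_trace hce]
end

section
/- Let G = (V,E) be a finite simple graph and D ⊆ V a set of 'deleted' vertices with U = V \ D. Let L(E,D) be the principal submatrix of L(G) indexed by U (the Dirichlet Laplacian). Then L(E,D) = L(G|_U) + Diag(b), where G|_U is the induced subgraph on U and b_v is the number of edges from v ∈ U to D; consequently, if the Laplacian spectrum of G|_U is majorized by its conjugate degree sequence, then the spectrum of L(E,D) is majorized by d^T(G|_U) + a^T, where a is the degree sequence in D of edges between D and U. In particular, Grone–Merris for graphs implies Grone–Merris for (edge, vertex) pairs: s(E,D) ⊴ d^T(E,D). -/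
open Finset in
/-- A weighted sum with weights in `[0, 1]` of total weight `k` is at most the sum of the weighted
function over some `k` indices. -/
theorem exists_card_eq_sum_mul_le {ι : Type*} [Fintype ι] [DecidableEq ι] (f c : ι → ℝ) (k : ℕ)
    (hc0 : ∀ i, 0 ≤ c i) (hc1 : ∀ i, c i ≤ 1) (hc : ∑ i, c i = k) :
    ∃ B : Finset ι, #B = k ∧ ∑ i, f i * c i ≤ ∑ i ∈ B, f i := by
  have hk : k ≤ #(univ : Finset ι) := by
    have : (k : ℝ) ≤ ∑ _i : ι, (1 : ℝ) := hc ▸ sum_le_sum fun i _ => hc1 i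
    simpa using this
  obtain ⟨B, hB, hmax⟩ := exists_max_image (powersetCard k (univ : Finset ι))
    (fun B => ∑ i ∈ B, f i) (powersetCard_nonempty.2 hk)
  have hBk : #B = k := (mem_powersetCard.1 hB).2
  refine ⟨B, hBk, ?_⟩
  have hswap : ∀ i ∈ B, ∀ j ∉ B, f j ≤ f i := by
    intro i hi j hj
    have hj' : j ∉ B.erase i := fun h => hj (mem_of_mem_erase h)
    have h := hmax (insert j (B.erase i)) (mem_powersetCard.2 ⟨subset_univ _, by
      rw [card_insert_of_notMem hj', card_erase_add_one hi, hBk]⟩)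
    rw [sum_insert hj', ← add_sum_erase B f hi] at h
    linarith
  rcases B.eq_empty_or_nonempty with rfl | hne
  · have hzero : ∀ i, c i = 0 := by
      have : ∑ i, c i = 0 := by rw [hc, ← hBk]; simp
      simpa using (sum_eq_zero_iff_of_nonneg fun i _ => hc0 i).1 this
    simp [hzero]
  · obtain ⟨m, hm, hmin⟩ := exists_min_image B f hne
    have key : ∑ i, (f i - f m) * c i ≤ ∑ i, if i ∈ B then f i - f m else 0 := by
      refine sum_le_sum fun i _ => ?_
      split_ifs with hi
      · nlinarith [hmin i hi, hc1 i]
      · nlinarith [hswap m hm i hi, hc0 i]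
    rw [sum_ite_mem, univ_inter, sum_sub_distrib, sum_const, nsmul_eq_mul, hBk] at key
    simp only [sub_mul, sum_sub_distrib, ← mul_sum, hc] at key
    linarith

open Finset Matrix in
/-- A partial diagonal sum of a unitary conjugate of `diagonal d` is at most a sum of equally many
entries of `d`. -/
theorem exists_card_eq_sum_conj_diagonal_le {n : Type*} [Fintype n] [DecidableEq n]
    (d : n → ℝ) (Q : Matrix n n ℝ) (hQ : Q ∈ unitaryGroup n ℝ) (A : Finset n) :
    ∃ B : Finset n, #B = #A ∧ ∑ j ∈ A, (star Q * diagonal d * Q) j j ≤ ∑ i ∈ B, d i := by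
  have hcol : ∀ j, ∑ i, Q i j ^ 2 = 1 := fun j => by
    have h := congrFun (congrFun (mem_unitaryGroup_iff'.1 hQ) j) j
    simpa [mul_apply, star_apply, sq] using h
  have hrow : ∀ i, ∑ j, Q i j ^ 2 = 1 := fun i => by
    have h := congrFun (congrFun (mem_unitaryGroup_iff.1 hQ) i) i
    simpa [mul_apply, star_apply, sq] using h
  obtain ⟨B, hB, h⟩ := exists_card_eq_sum_mul_le d (fun i => ∑ j ∈ A, Q i j ^ 2) #A
    (fun i => sum_nonneg fun j _ => sq_nonneg _)
    (fun i => hrow i ▸ sum_le_sum_of_subset_of_nonneg (subset_univ A) fun j _ _ => sq_nonneg _)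
    (by rw [sum_comm]; simp [hcol])
  refine ⟨B, hB, le_of_eq_of_le ?_ h⟩
  simp only [mul_sum]
  rw [sum_comm]
  refine sum_congr rfl fun j _ => ?_
  rw [mul_apply]
  refine sum_congr rfl fun i _ => ?_
  rw [mul_diagonal, star_apply, star_trivial]
  ring

open Finset Matrix in
/-- Fan's inequality for the sum of a Hermitian matrix and a diagonal matrix. -/
theorem exists_sum_eigenvalues_add_diagonal_le {n : Type*} [Fintype n] [DecidableEq n]
    {M N : Matrix n n ℝ} (hM : M.IsHermitian) (hN : N.IsHermitian) (b : n → ℝ)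
    (hNM : N = M + diagonal b) (A : Finset n) :
    ∃ B C : Finset n, #B = #A ∧ #C = #A ∧
      ∑ j ∈ A, hN.eigenvalues j ≤ ∑ i ∈ B, hM.eigenvalues i + ∑ i ∈ C, b i := by
  set P := hN.eigenvectorUnitary
  set R := hM.eigenvectorUnitary
  have hMspec : M = (R : Matrix n n ℝ) * diagonal hM.eigenvalues * star (R : Matrix n n ℝ) := by
    simpa [Unitary.conjStarAlgAut_apply] using hM.spectral_theorem
  have hNspec : N = (P : Matrix n n ℝ) * diagonal hN.eigenvalues * star (P : Matrix n n ℝ) := by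
    simpa [Unitary.conjStarAlgAut_apply] using hN.spectral_theorem
  have hP : star (P : Matrix n n ℝ) * (P : Matrix n n ℝ) = 1 := Unitary.coe_star_mul_self P
  obtain ⟨B, hB, hB'⟩ := exists_card_eq_sum_conj_diagonal_le hM.eigenvalues _ (star R * P).2 A
  obtain ⟨C, hC, hC'⟩ := exists_card_eq_sum_conj_diagonal_le b _ P.2 A
  refine ⟨B, C, hB, hC, le_of_eq_of_le ?_ (add_le_add hB' hC')⟩
  rw [← sum_add_distrib]
  refine sum_congr rfl fun j _ => ?_
  have hdiag : diagonal hN.eigenvalues =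
      star ((star R * P : unitaryGroup n ℝ) : Matrix n n ℝ) * diagonal hM.eigenvalues *
        ((star R * P : unitaryGroup n ℝ) : Matrix n n ℝ) +
      star (P : Matrix n n ℝ) * diagonal b * (P : Matrix n n ℝ) := by
    calc diagonal hN.eigenvalues
        = star (P : Matrix n n ℝ) * N * (P : Matrix n n ℝ) := by
          conv_rhs => rw [hNspec]
          simp only [mul_assoc, hP, mul_one]
          rw [← mul_assoc, hP, one_mul]
      _ = _ := by
          rw [hNM, mul_add, add_mul]
          congr 1
          conv_lhs => rw [hMspec]
          simp [mul_assoc]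
  simpa using congrFun (congrFun hdiag j) j

open Finset in
theorem Fin.card_filter_lt_and_succ_le {n k : ℕ} (hk : k ≤ n) (m : ℕ) :
    #{i : Fin n | (i : ℕ) < k ∧ (i : ℕ) + 1 ≤ m} = min k m := by
  have : #{i : Fin n | (i : ℕ) < min k m} = min k m := by
    rw [Fin.card_filter_val_lt]; omega
  rw [← this]
  congr 1
  ext i
  simp only [mem_filter, mem_univ, true_and]
  omega

open Finset in
/-- Partial sums of a conjugate sequence. -/
theorem sum_filter_lt_card_filter_succ_le {α : Type*} (S : Finset α) (d : α → ℕ) {n k : ℕ}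
    (hk : k ≤ n) :
    ∑ i ∈ univ.filter fun i : Fin n => (i : ℕ) < k, #{x ∈ S | (i : ℕ) + 1 ≤ d x} = ∑ x ∈ S, min k (d x) := by
  simp only [card_filter]
  rw [sum_comm]
  refine sum_congr rfl fun x _ => ?_
  rw [← card_filter, filter_filter, Fin.card_filter_lt_and_succ_le hk]

open Finset in
/-- The sum of `k` terms of a conjugate sequence is at most the sum of its first `k` terms. -/
theorem sum_card_filter_succ_le_le {α : Type*} (S : Finset α) (d : α → ℕ) {n : ℕ}
    (B : Finset (Fin n)) :
    ∑ i ∈ B, #{x ∈ S | (i : ℕ) + 1 ≤ d x} ≤ ∑ x ∈ S, min #B (d x) := by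
  simp only [card_filter]
  rw [sum_comm]
  refine sum_le_sum fun x _ => ?_
  rw [← card_filter]
  refine le_min (card_filter_le _ _) ?_
  calc #(B.filter fun i : Fin n => (i : ℕ) + 1 ≤ d x) ≤ #{i : Fin n | (i : ℕ) < n ∧ (i : ℕ) + 1 ≤ d x} :=
        card_le_card fun i hi => by simpa using (mem_filter.1 hi).2
    _ ≤ d x := by rw [Fin.card_filter_lt_and_succ_le le_rfl]; exact min_le_right _ _

open Finset in
/-- The Gale–Ryser inequality. -/
theorem sum_card_bipartite_le_sum_min {α β : Type*} [Fintype β] (S : Finset α) (r : β → α → Prop)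
    [∀ x y, Decidable (r x y)] (C : Finset β) :
    ∑ y ∈ C, #{x ∈ S | r y x} ≤ ∑ x ∈ S, min #C #{y | r y x} := by
  simp only [card_filter]
  rw [sum_comm]
  refine sum_le_sum fun x _ => ?_
  simp only [← card_filter]
  exact le_min (card_filter_le _ _) (card_le_card (filter_subset_filter _ (subset_univ _)))

open Finset in
theorem Finset.card_filter_univ_eq_subtype_add {V : Type*} [Fintype V] [DecidableEq V]
    (D : Finset V) (p : V → Prop) [DecidablePred p] :
    #{v | p v} = #{v : {v : V // v ∉ D} | p v.1} + #{v ∈ D | p v} := by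
  have h : #{v : {v : V // v ∉ D} | p v.1} = #{v ∈ Dᶜ | p v} := by
    rw [← card_map (Function.Embedding.subtype _)]
    congr 1
    ext v
    simp [and_comm]
  rw [h, add_comm]
  simp only [card_filter]
  exact (sum_add_sum_compl D _).symm

open Finset in
/-- The Dirichlet Laplacian is the Laplacian of the induced subgraph plus the diagonal matrix of
degrees into the deleted set. -/
theorem SimpleGraph.lapMatrix_submatrix_compl {V : Type*} [Fintype V] [DecidableEq V]
    (G : SimpleGraph V) [DecidableRel G.Adj] (D : Finset V) :
    (G.lapMatrix ℝ).submatrix Subtype.val Subtype.val =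
      (Matrix.of fun v w : {v : V // v ∉ D} =>
        if v = w then (#{u : {v : V // v ∉ D} | G.Adj v.1 u.1} : ℝ)
        else if G.Adj v.1 w.1 then -1 else 0) +
      Matrix.diagonal fun v => (#{u ∈ D | G.Adj v.1 u} : ℝ) := by
  ext v w
  by_cases hvw : v = w
  · subst hvw
    have hdeg : G.degree v.1 =
        #{u : {v : V // v ∉ D} | G.Adj v.1 u.1} + #{u ∈ D | G.Adj v.1 u} := by
      rw [← G.card_neighborFinset_eq_degree, G.neighborFinset_eq_filter]
      exact card_filter_univ_eq_subtype_add D _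
    simp [SimpleGraph.lapMatrix, SimpleGraph.degMatrix, hdeg]
  · have hvw' : (v : V) ≠ w := fun h => hvw (Subtype.ext h)
    by_cases hadj : G.Adj v.1 w.1 <;>
      simp [SimpleGraph.lapMatrix, SimpleGraph.degMatrix, hvw, hvw', hadj]

open Finset in
theorem dirichlet_groneMerris {V : Type*} [Fintype V] [DecidableEq V]
    (G : SimpleGraph V) [DecidableRel G.Adj] (D : Finset V)
    (LU LED : Matrix {v : V // v ∉ D} {v : V // v ∉ D} ℝ)
    (hLU : LU = Matrix.of fun v w =>
      if v = w then ((Finset.univ.filter fun u : {v : V // v ∉ D} => G.Adj v.1 u.1).card : ℝ)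
      else if G.Adj v.1 w.1 then -1 else 0)
    (hLED : LED = (G.lapMatrix ℝ).submatrix Subtype.val Subtype.val)
    (hU : LU.IsHermitian) (hED : LED.IsHermitian)
    (dTU aT dTED : Fin (Fintype.card {v : V // v ∉ D}) → ℝ)
    (hdTU : dTU = fun i : Fin (Fintype.card {v : V // v ∉ D}) => ((Finset.univ.filter fun v : {v : V // v ∉ D} =>
      (i : ℕ) + 1 ≤ (Finset.univ.filter fun u : {v : V // v ∉ D} => G.Adj v.1 u.1).card).card : ℝ))
    (haT : aT = fun i : Fin (Fintype.card {v : V // v ∉ D}) => ((D.filter fun v =>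
      (i : ℕ) + 1 ≤ (Finset.univ.filter fun u : {v : V // v ∉ D} => G.Adj v u.1).card).card : ℝ))
    (hdTED : dTED = fun i : Fin (Fintype.card {v : V // v ∉ D}) => ((Finset.univ.filter fun v : V =>
      (i : ℕ) + 1 ≤ (Finset.univ.filter fun u : {v : V // v ∉ D} => G.Adj v u.1).card).card : ℝ)) :
    (LED = LU + Matrix.diagonal fun v => ((D.filter fun u => G.Adj v.1 u).card : ℝ)) ∧
    (Majorizes dTU hU.eigenvalues → Majorizes (dTU + aT) hED.eigenvalues) ∧
    (Majorizes dTU hU.eigenvalues → Majorizes dTED hED.eigenvalues) := by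
  have hdecomp : LED = LU + Matrix.diagonal fun v => (#{u ∈ D | G.Adj v.1 u} : ℝ) := by
    rw [hLED, hLU]
    exact G.lapMatrix_submatrix_compl D
  have hsplit : dTED = dTU + aT := by
    subst hdTED hdTU haT
    funext i
    dsimp only [Pi.add_apply]
    exact_mod_cast card_filter_univ_eq_subtype_add D
      fun v => (i : ℕ) + 1 ≤ #{u : {v : V // v ∉ D} | G.Adj v u.1}
  have hmain : Majorizes dTU hU.eigenvalues → Majorizes (dTU + aT) hED.eigenvalues := by
    rintro ⟨hpart, htot⟩
    have hsymm : ∀ x : V, #{y : {v : V // v ∉ D} | G.Adj y.1 x} =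
        #{y : {v : V // v ∉ D} | G.Adj x y.1} := fun x => by simp only [G.adj_comm]
    refine ⟨fun A => ?_, ?_⟩
    · obtain ⟨B, C, hB, hC, hBC⟩ := exists_sum_eigenvalues_add_diagonal_le hU hED _ hdecomp A
      obtain ⟨B', hB', hle⟩ := hpart B
      have hA : #A ≤ Fintype.card {v : V // v ∉ D} := card_le_univ A
      let F : Finset (Fin (Fintype.card {v : V // v ∉ D})) := univ.filter fun i => i.val < #A
      have hF : #F = #A := by rw [Fin.card_filter_val_lt]; omega
      refine ⟨F, hF, ?_⟩
      have h1 : ∑ i ∈ B', dTU i ≤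
          ∑ i ∈ F, dTU i := by
        rw [hdTU]
        dsimp only
        rw [← Nat.cast_sum, ← Nat.cast_sum, Nat.cast_le, sum_filter_lt_card_filter_succ_le _ _ hA,
          ← hB, ← hB']
        exact sum_card_filter_succ_le_le _ _ _
      have h2 : ∑ v ∈ C, (#{u ∈ D | G.Adj v.1 u} : ℝ) ≤
          ∑ i ∈ F, aT i := by
        rw [haT]
        dsimp only
        rw [← Nat.cast_sum, ← Nat.cast_sum, Nat.cast_le, sum_filter_lt_card_filter_succ_le _ _ hA,
          ← hC]
        simpa only [hsymm] using
          sum_card_bipartite_le_sum_min D (fun (v : {v : V // v ∉ D}) u => G.Adj v.1 u) C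
      simp only [Pi.add_apply, sum_add_distrib]
      linarith
    · have htrED : LED.trace = ∑ i, hED.eigenvalues i := by
        simpa using hED.trace_eq_sum_eigenvalues
      have htrU : LU.trace = ∑ i, hU.eigenvalues i := by
        simpa using hU.trace_eq_sum_eigenvalues
      have hb : ∑ v : {v : V // v ∉ D}, (#{u ∈ D | G.Adj v.1 u} : ℝ) = ∑ i, aT i := by
        rw [haT]
        dsimp only
        rw [← Nat.cast_sum, ← Nat.cast_sum, Nat.cast_inj]
        have h := sum_filter_lt_card_filter_succ_le D
          (fun v => #{u : {v : V // v ∉ D} | G.Adj v u.1})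
          (le_refl (Fintype.card {v : V // v ∉ D}))
        simp only [Fin.is_lt, filter_true, min_eq_right (card_le_univ _)] at h
        rw [h]
        simp only [← hsymm, card_filter]
        exact sum_comm
      simp only [Pi.add_apply, sum_add_distrib]
      rw [← htrED, hdecomp, Matrix.trace_add, Matrix.trace_diagonal, htrU, htot, hb]
  exact ⟨hdecomp, hmain, fun h => hsplit ▸ hmain h⟩
end
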